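/- The real vector space consisting of germs at 0 of holomorphic 4-tuples (f, g, h, e) that are tangent to Q near 0 and satisfy f(0) = g(0) = h(0) = e(0) = 0 has dimension exactly 9. -/

import Mathlib

open Complex ComplexConjugate Filter Topology
/-- Coordinates on `ℂ⁴`: `p 0, p 1` are `z₁, z₂`; `p 2` is `ζ`; `p 3` is `w`. -/
abbrev E4 : Type := Fin 4 → ℂ

/-- The model hypersurface `Q = {Im w = 2 Re (z₁ ζ̄) + 2 Re (z₂ ζ̄²)} ⊆ ℂ⁴`. -/
def Q : Set E4 :=
  {p | (p 3).im = 2 * (p 0 * conj (p 2)).re + 2 * (p 1 * (conj (p 2)) ^ 2).re}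

/-- The 4-tuple `(f, g, h, e)` is tangent to `Q` on `U`. -/
def TangentOn (f g h e : E4 → ℂ) (U : Set E4) : Prop :=
  ∀ p ∈ Q ∩ U,
    (e p).im = 2 * (f p * conj (p 2) + g p * (conj (p 2)) ^ 2
      + h p * (conj (p 0) + 2 * conj (p 1) * p 2)).re

/-- Germs at `0 ∈ ℂ⁴` of complex-valued functions. -/
abbrev G4 : Type := Filter.Germ (𝓝 (0 : E4)) ℂ

/-- Germs at `0` of holomorphic 4-tuples tangent to `Q` near `0` and vanishing at `0`. -/
def tangentGerms0 : Set (G4 × G4 × G4 × G4) :=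
  {t | ∃ f g h e : E4 → ℂ, t = (↑f, ↑g, ↑h, ↑e) ∧
    f 0 = 0 ∧ g 0 = 0 ∧ h 0 = 0 ∧ e 0 = 0 ∧
    ∃ V : Set E4, IsOpen V ∧ (0 : E4) ∈ V ∧
      DifferentiableOn ℂ f V ∧ DifferentiableOn ℂ g V ∧
      DifferentiableOn ℂ h V ∧ DifferentiableOn ℂ e V ∧
      TangentOn f g h e V}


/-- Holomorphic functions vanishing at real points vanish. -/
lemma real_unique {n : ℕ} (F : (Fin n → ℂ) → ℂ) (r : ℝ)
    (hF : DifferentiableOn ℂ F (Metric.ball 0 r))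
    (h0 : ∀ x : Fin n → ℝ, (fun i => (x i : ℂ)) ∈ Metric.ball (0 : Fin n → ℂ) r →
      F (fun i => (x i : ℂ)) = 0) :
    ∀ y ∈ Metric.ball (0 : Fin n → ℂ) r, F y = 0 := by
  intro y hy
  have hr : 0 < r := by
    by_contra h
    rw [Metric.ball_eq_empty.2 (not_lt.1 h)] at hy; exact hy
  let s : Fin n → ℂ := fun i => ((y i).re : ℂ)
  let t : Fin n → ℂ := fun i => ((y i).im : ℂ)
  let L : ℂ → (Fin n → ℂ) := fun l => s + l • t
  have hL : Differentiable ℂ L := by fun_prop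
  let U : Set ℂ := L ⁻¹' Metric.ball 0 r
  have hUo : IsOpen U := Metric.isOpen_ball.preimage hL.continuous
  have hUc : Convex ℝ U := by
    intro a ha b hb p q hp hq hpq
    have h1 := (convex_ball (0 : Fin n → ℂ) r) ha hb hp hq hpq
    have : L (p • a + q • b) = p • L a + q • L b := by
      have hpq' : (p : ℂ) + q = 1 := by exact_mod_cast hpq
      funext i
      simp only [L, Pi.add_apply, Pi.smul_apply, smul_eq_mul, real_smul]
      linear_combination (-(s i)) * hpq'
    show L _ ∈ Metric.ball 0 r
    rw [this]; exact h1
  have hy' : L I = y := by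
    funext i
    simp only [L, s, t, Pi.add_apply, Pi.smul_apply, smul_eq_mul]
    rw [mul_comm]; exact re_add_im _
  have hIU : I ∈ U := by show L I ∈ Metric.ball 0 r; rwa [hy']
  have hs : s ∈ Metric.ball (0 : Fin n → ℂ) r := by
    rw [mem_ball_zero_iff] at hy ⊢
    rw [pi_norm_lt_iff hr] at hy ⊢
    intro i
    refine lt_of_le_of_lt ?_ (hy i)
    simp only [s, norm_real]
    exact abs_re_le_norm _
  have h0U : (0:ℂ) ∈ U := by show L 0 ∈ Metric.ball 0 r; simpa [L] using hs
  have hd : DifferentiableOn ℂ (F ∘ L) U := hF.comp hL.differentiableOn (fun x hx => hx)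
  have han := hd.analyticOnNhd hUo
  have hfr : ∃ᶠ z in 𝓝[≠] (0:ℂ), (F ∘ L) z = 0 := by
    have h1 : Tendsto (fun k : ℝ => (k : ℂ)) (𝓝[≠] 0) (𝓝[≠] (0:ℂ)) := by
      apply tendsto_nhdsWithin_iff.2 ⟨?_, ?_⟩
      · have : Tendsto (fun k : ℝ => (k : ℂ)) (𝓝 0) (𝓝 ((0:ℝ):ℂ)) := continuous_ofReal.tendsto 0
        exact (by simpa using this : Tendsto (fun k : ℝ => (k : ℂ)) (𝓝 0) (𝓝 (0:ℂ))).mono_left nhdsWithin_le_nhds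
      · filter_upwards [self_mem_nhdsWithin] with k hk
        simpa using hk
    have hev : ∀ᶠ k : ℝ in 𝓝[≠] 0, (F ∘ L) (k : ℂ) = 0 := by
      have h2 : ∀ᶠ k : ℝ in 𝓝[≠] 0, (k : ℂ) ∈ U :=
        (h1.mono_right nhdsWithin_le_nhds).eventually (hUo.mem_nhds h0U)
      filter_upwards [h2] with k hk
      have := h0 (fun i => (y i).re + k * (y i).im)
      have he : (fun i => (((y i).re + k * (y i).im : ℝ) : ℂ)) = L k := by
        funext i; simp [L, s, t]
      rw [he] at this
      exact this hk
    exact h1.frequently hev.frequently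
  have := han.eqOn_zero_of_preconnected_of_frequently_eq_zero hUc.isPreconnected h0U hfr hIU
  simpa [hy'] using this

/-- the conjugate function -/
noncomputable def cj (f : E4 → ℂ) : E4 → ℂ := fun q => conj (f (fun i => conj (q i)))

lemma cj_diff {f : E4 → ℂ} {q : E4} (h : DifferentiableAt ℂ f (fun i => conj (q i))) :
    DifferentiableAt ℂ (cj f) q := by
  have h1 : (star fun i => conj (q i) : E4) = q := by
    funext i; simp
  have := h.star_star
  rw [h1] at this
  exact this

lemma poly_zero (c : ℕ → ℂ) (n : ℕ) (r : ℝ) (hr : 0 < r)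
    (h : ∀ x : ℂ, ‖x‖ < r → ∑ i ∈ Finset.range n, c i * x ^ i = 0) : ∀ i < n, c i = 0 := by
  classical
  let p : Polynomial ℂ := ∑ i ∈ Finset.range n, Polynomial.monomial i (c i)
  have hp : p = 0 := by
    apply Polynomial.eq_zero_of_infinite_isRoot
    apply Set.Infinite.mono (s := Metric.ball 0 r)
    · intro x hx
      have := h x (by simpa using hx)
      simp [p, Polynomial.IsRoot, Polynomial.eval_finsetSum, this]
    · exact infinite_of_mem_nhds 0 (Metric.ball_mem_nhds _ hr)
  intro i hi
  have : p.coeff i = c i := by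
    simp [p, Polynomial.finsetSum_coeff, Polynomial.coeff_monomial, hi]
  rw [← this, hp]; simp

/-- complexified defining polynomial -/
def PP (z₁ z₂ ζ a b c : ℂ) : ℂ := z₁ * c + z₂ * c ^ 2 + a * ζ + b * ζ ^ 2

/-- holomorphic point -/
noncomputable def pt (x : Fin 7 → ℂ) : E4 :=
  ![x 0 + I * x 1, x 2 + I * x 3, x 4 + I * x 5,
    x 6 + I * PP (x 0 + I * x 1) (x 2 + I * x 3) (x 4 + I * x 5)
      (x 0 - I * x 1) (x 2 - I * x 3) (x 4 - I * x 5)]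

/-- conjugate point -/
noncomputable def qt (x : Fin 7 → ℂ) : E4 :=
  ![x 0 - I * x 1, x 2 - I * x 3, x 4 - I * x 5,
    x 6 - I * PP (x 0 + I * x 1) (x 2 + I * x 3) (x 4 + I * x 5)
      (x 0 - I * x 1) (x 2 - I * x 3) (x 4 - I * x 5)]

lemma pt_diff : Differentiable ℂ pt := by
  unfold pt PP
  rw [differentiable_pi]
  intro i
  fin_cases i <;> simp <;> fun_prop

lemma qt_diff : Differentiable ℂ qt := by
  unfold qt PP
  rw [differentiable_pi]
  intro i
  fin_cases i <;> simp <;> fun_prop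

lemma qt_real (x : Fin 7 → ℝ) :
    (fun i => conj (qt (fun i => (x i : ℂ)) i)) = pt (fun i => (x i : ℂ)) := by
  funext i
  fin_cases i
  · simp [pt, qt]
  · simp [pt, qt]
  · simp [pt, qt]
  · simp [pt, qt, PP]; ring

lemma pt_real_mem (x : Fin 7 → ℝ) : pt (fun i => (x i : ℂ)) ∈ Q := by
  simp [Q, pt, PP, pow_two]; ring

/-- the complexified tangency defect -/
noncomputable def defect (f g h e fs gs hs es : E4 → ℂ) (p q : E4) : ℂ :=
  e p - es q - 2 * I * (f p * q 2 + g p * q 2 ^ 2 + h p * (q 0 + 2 * q 1 * p 2)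
    + fs q * p 2 + gs q * p 2 ^ 2 + hs q * (p 0 + 2 * p 1 * q 2))

lemma defect_real {f g h e : E4 → ℂ} {V : Set E4} (hT : TangentOn f g h e V)
    (x : Fin 7 → ℝ) (hx : pt (fun i => (x i : ℂ)) ∈ V) :
    defect f g h e (cj f) (cj g) (cj h) (cj e) (pt (fun i => (x i : ℂ)))
      (qt (fun i => (x i : ℂ))) = 0 := by
  have h1 := hT _ ⟨pt_real_mem x, hx⟩
  unfold defect cj
  simp only [qt_real]
  have hq : ∀ i, qt (fun i => (x i : ℂ)) i = conj (pt (fun i => (x i : ℂ)) i) := by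
    intro i
    rw [← qt_real]; simp
  rw [hq 0, hq 1, hq 2]
  generalize pt (fun i => (x i : ℂ)) = p at *
  generalize f p = F at *
  generalize g p = G at *
  generalize h p = H at *
  generalize e p = E at *
  generalize p 0 = z₁ at *
  generalize p 1 = z₂ at *
  generalize p 2 = ζ at *
  have h2 : E - conj E = 2 * I * (E.im : ℂ) := by
    apply Complex.ext <;> simp; ring
  rw [h2, h1]
  have h3 := Complex.add_conj (F * conj ζ + G * conj ζ ^ 2 + H * (conj z₁ + 2 * conj z₂ * ζ))
  rw [← h3]
  simp only [map_add, map_mul, map_pow, Complex.conj_conj, map_ofNat]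
  ring

lemma polar {f g h e : E4 → ℂ} {V : Set E4} (hV : IsOpen V) (h0 : (0 : E4) ∈ V)
    (hf : DifferentiableOn ℂ f V) (hg : DifferentiableOn ℂ g V)
    (hh : DifferentiableOn ℂ h V) (he : DifferentiableOn ℂ e V)
    (hT : TangentOn f g h e V) :
    ∃ r > 0, Metric.ball 0 r ⊆ V ∧
      ∀ p ∈ Metric.ball (0 : E4) r, ∀ q ∈ Metric.ball (0 : E4) r,
        p 3 - q 3 = 2 * I * PP (p 0) (p 1) (p 2) (q 0) (q 1) (q 2) →
        defect f g h e (cj f) (cj g) (cj h) (cj e) p q = 0 := by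
  have hp0 : pt 0 = 0 := by
    funext i; fin_cases i <;> simp [pt, PP]
  have hq0 : qt 0 = 0 := by
    funext i; fin_cases i <;> simp [qt, PP]
  have cc : Continuous (fun q : E4 => (fun i => conj (q i) : E4)) := by
    apply continuous_pi; intro i
    exact Complex.continuous_conj.comp (continuous_apply i)
  have e1 : ∀ᶠ x in 𝓝 (0 : Fin 7 → ℂ), pt x ∈ V :=
    pt_diff.continuous.continuousAt.eventually (by rw [hp0]; exact hV.mem_nhds h0)
  have e2 : ∀ᶠ x in 𝓝 (0 : Fin 7 → ℂ), (fun i => conj (qt x i)) ∈ V :=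
    (cc.comp qt_diff.continuous).continuousAt.eventually (by
      apply hV.mem_nhds
      simp only [Function.comp, hq0]
      convert h0 using 1
      funext i; simp)
  obtain ⟨ρ, hρ, hρ'⟩ := Metric.eventually_nhds_iff_ball.1 (e1.and e2)
  have key : ∀ x ∈ Metric.ball (0 : Fin 7 → ℂ) ρ,
      defect f g h e (cj f) (cj g) (cj h) (cj e) (pt x) (qt x) = 0 := by
    apply real_unique (fun x => defect f g h e (cj f) (cj g) (cj h) (cj e) (pt x) (qt x)) ρ
    · intro x hx
      apply DifferentiableAt.differentiableWithinAt
      have hpt := (pt_diff x)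
      have hqt := (qt_diff x)
      have hp := hV.mem_nhds (hρ' x hx).1
      have hq := hV.mem_nhds (hρ' x hx).2
      have d1 : ∀ {k : E4 → ℂ}, DifferentiableOn ℂ k V →
          DifferentiableAt ℂ (fun x => k (pt x)) x := fun hk =>
        (hk.differentiableAt hp).comp x hpt
      have d2 : ∀ {k : E4 → ℂ}, DifferentiableOn ℂ k V →
          DifferentiableAt ℂ (fun x => cj k (qt x)) x := fun hk =>
        (cj_diff (hk.differentiableAt hq)).comp x hqt
      have c1 : ∀ i, DifferentiableAt ℂ (fun x => pt x i) x := fun i =>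
        (differentiableAt_pi.1 hpt) i
      have c2 : ∀ i, DifferentiableAt ℂ (fun x => qt x i) x := fun i =>
        (differentiableAt_pi.1 hqt) i
      unfold defect
      refine DifferentiableAt.sub (DifferentiableAt.sub (d1 he) (d2 he)) ?_
      refine DifferentiableAt.const_mul ?_ _
      exact ((((((d1 hf).mul (c2 2)).add ((d1 hg).mul ((c2 2).pow 2))).add
        ((d1 hh).mul ((c2 0).add (((c2 1).const_mul 2).mul (c1 2))))).add
        ((d2 hf).mul (c1 2))).add ((d2 hg).mul ((c1 2).pow 2))).add
        ((d2 hh).mul ((c1 0).add (((c1 1).const_mul 2).mul (c2 2))))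
    · intro x hx
      exact defect_real hT x (hρ' _ hx).1
  let iv : E4 × E4 → (Fin 7 → ℂ) := fun t =>
    ![(t.1 0 + t.2 0) / 2, (t.1 0 - t.2 0) / (2 * I), (t.1 1 + t.2 1) / 2,
      (t.1 1 - t.2 1) / (2 * I), (t.1 2 + t.2 2) / 2, (t.1 2 - t.2 2) / (2 * I),
      (t.1 3 + t.2 3) / 2]
  have hiv : Continuous iv := by
    apply continuous_pi
    intro i
    fin_cases i <;> simp [iv] <;> fun_prop
  have hiv0 : iv 0 = 0 := by
    funext i; fin_cases i <;> simp [iv]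
  have e3 : ∀ᶠ t in 𝓝 (0 : E4 × E4), iv t ∈ Metric.ball 0 ρ :=
    hiv.continuousAt.eventually (by rw [hiv0]; exact Metric.ball_mem_nhds _ hρ)
  obtain ⟨r₁, hr₁, hr₁'⟩ := Metric.eventually_nhds_iff_ball.1 e3
  obtain ⟨r₂, hr₂, hr₂'⟩ := Metric.isOpen_iff.1 hV 0 h0
  refine ⟨min r₁ r₂, lt_min hr₁ hr₂,
    (Metric.ball_subset_ball (min_le_right _ _)).trans hr₂', ?_⟩
  intro p hp q hq hpq
  have hm : (p, q) ∈ Metric.ball (0 : E4 × E4) r₁ := by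
    rw [mem_ball_zero_iff] at hp hq ⊢
    exact max_lt (lt_of_lt_of_le hp (min_le_left _ _)) (lt_of_lt_of_le hq (min_le_left _ _))
  have hk := key _ (hr₁' _ hm)
  have j0 : ∀ i, (p i + q i) / 2 + I * ((p i - q i) / (2 * I)) = p i := by
    intro i; field_simp; ring
  have j1 : ∀ i, (p i + q i) / 2 - I * ((p i - q i) / (2 * I)) = q i := by
    intro i; field_simp; ring
  have i1 : pt (iv (p, q)) = p := by
    funext i
    fin_cases i
    · simpa [pt, iv] using j0 0
    · simpa [pt, iv] using j0 1
    · simpa [pt, iv] using j0 2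
    · simp [pt, iv, j0, j1]
      linear_combination (-1/2) * hpq
  have i2 : qt (iv (p, q)) = q := by
    funext i
    fin_cases i
    · simpa [qt, iv] using j1 0
    · simpa [qt, iv] using j1 1
    · simpa [qt, iv] using j1 2
    · simp [qt, iv, j0, j1]
      linear_combination (1/2) * hpq
  rwa [i1, i2] at hk

/-- complexified tangency identity on a polydisc -/
def Good (f g h e fs gs hs es : E4 → ℂ) (r : ℝ) : Prop :=
  ∀ z₁ z₂ ζ w a b c w' : ℂ, ‖z₁‖ < r → ‖z₂‖ < r → ‖ζ‖ < r → ‖w‖ < r →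
    ‖a‖ < r → ‖b‖ < r → ‖c‖ < r → ‖w'‖ < r →
    w - w' = 2 * I * PP z₁ z₂ ζ a b c →
    e ![z₁, z₂, ζ, w] - es ![a, b, c, w'] = 2 * I * (f ![z₁, z₂, ζ, w] * c
      + g ![z₁, z₂, ζ, w] * c ^ 2 + h ![z₁, z₂, ζ, w] * (a + 2 * b * ζ)
      + fs ![a, b, c, w'] * ζ + gs ![a, b, c, w'] * ζ ^ 2
      + hs ![a, b, c, w'] * (z₁ + 2 * z₂ * c))

lemma mem_ball4 {r : ℝ} {a b c d : ℂ} (ha : ‖a‖ < r) (hb : ‖b‖ < r) (hc : ‖c‖ < r)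
    (hd : ‖d‖ < r) : (![a, b, c, d] : E4) ∈ Metric.ball (0 : E4) r := by
  have hr : 0 < r := lt_of_le_of_lt (norm_nonneg _) ha
  rw [mem_ball_zero_iff, pi_norm_lt_iff hr]
  intro i; fin_cases i <;> simpa

lemma norm_of_mem {r : ℝ} {p : E4} (hp : p ∈ Metric.ball (0 : E4) r) (i : Fin 4) :
    ‖p i‖ < r := by
  rw [mem_ball_zero_iff] at hp
  exact lt_of_le_of_lt (norm_le_pi_norm p i) hp

section phase1
variable {f g h e fs gs hs es : E4 → ℂ} {r : ℝ}

lemma stepA (G : Good f g h e fs gs hs es r) {z₁ z₂ ζ w : ℂ} (h1 : ‖z₁‖ < r) (h2 : ‖z₂‖ < r)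
    (h3 : ‖ζ‖ < r) (hw : ‖w‖ < r) :
    e ![z₁, z₂, ζ, w] = es ![0, 0, 0, w] + 2 * I * (fs ![0, 0, 0, w] * ζ
      + gs ![0, 0, 0, w] * ζ ^ 2 + hs ![0, 0, 0, w] * z₁) := by
  have h0 : ‖(0:ℂ)‖ < r := by simpa using lt_of_le_of_lt (norm_nonneg _) h1
  have := G z₁ z₂ ζ w 0 0 0 w h1 h2 h3 hw h0 h0 h0 hw (by simp [PP])
  linear_combination this

lemma stepA' (G : Good f g h e fs gs hs es r) {a b c w : ℂ} (h1 : ‖a‖ < r) (h2 : ‖b‖ < r)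
    (h3 : ‖c‖ < r) (hw : ‖w‖ < r) :
    es ![a, b, c, w] = e ![0, 0, 0, w] - 2 * I * (f ![0, 0, 0, w] * c
      + g ![0, 0, 0, w] * c ^ 2 + h ![0, 0, 0, w] * a) := by
  have h0 : ‖(0:ℂ)‖ < r := by simpa using lt_of_le_of_lt (norm_nonneg _) h1
  have := G 0 0 0 w a b c w h0 h0 h0 hw h1 h2 h3 hw (by simp [PP])
  linear_combination -this

lemma lin4 (L : E4 →L[ℂ] ℂ) (a b c d : ℂ) : L ![a, b, c, d] =
    a * L ![1, 0, 0, 0] + b * L ![0, 1, 0, 0] + c * L ![0, 0, 1, 0] + d * L ![0, 0, 0, 1] := by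
  have : (![a, b, c, d] : E4) = a • ![1, 0, 0, 0] + b • ![0, 1, 0, 0] + c • ![0, 0, 1, 0]
      + d • ![0, 0, 0, 1] := by
    funext i; fin_cases i <;> simp
  rw [this]
  simp only [map_add, map_smul, smul_eq_mul]

lemma hasDeriv4 {q0 q1 q2 q3 : ℂ → ℂ} {d0 d1 d2 d3 t : ℂ} (h0 : HasDerivAt q0 d0 t)
    (h1 : HasDerivAt q1 d1 t) (h2 : HasDerivAt q2 d2 t) (h3 : HasDerivAt q3 d3 t) :
    HasDerivAt (fun t => (![q0 t, q1 t, q2 t, q3 t] : E4)) ![d0, d1, d2, d3] t := by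
  rw [hasDerivAt_pi]
  intro i; fin_cases i <;> simpa

lemma stepB (G : Good f g h e fs gs hs es r) {w : ℂ} (hw : ‖w‖ < r)
    (dfs : DifferentiableAt ℂ fs ![0, 0, 0, w]) (dgs : DifferentiableAt ℂ gs ![0, 0, 0, w])
    (dhs : DifferentiableAt ℂ hs ![0, 0, 0, w]) (des : DifferentiableAt ℂ es ![0, 0, 0, w])
    (α β γ : ℂ) {z₁ z₂ ζ : ℂ} (h1 : ‖z₁‖ < r) (h2 : ‖z₂‖ < r)
    (h3 : ‖ζ‖ < r) :
    - fderiv ℂ es ![0, 0, 0, w] ![α, β, γ, -2 * I * (γ * z₁ + α * ζ + β * ζ ^ 2)] =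
    2 * I * (f ![z₁, z₂, ζ, w] * γ + h ![z₁, z₂, ζ, w] * (α + 2 * β * ζ)
      + fderiv ℂ fs ![0, 0, 0, w] ![α, β, γ, -2 * I * (γ * z₁ + α * ζ + β * ζ ^ 2)] * ζ
      + fderiv ℂ gs ![0, 0, 0, w] ![α, β, γ, -2 * I * (γ * z₁ + α * ζ + β * ζ ^ 2)] * ζ ^ 2
      + fderiv ℂ hs ![0, 0, 0, w] ![α, β, γ, -2 * I * (γ * z₁ + α * ζ + β * ζ ^ 2)] * z₁
      + 2 * hs ![0, 0, 0, w] * z₂ * γ) := by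
  have hr : 0 < r := lt_of_le_of_lt (norm_nonneg _) h1
  set v : E4 := ![α, β, γ, -2 * I * (γ * z₁ + α * ζ + β * ζ ^ 2)] with hv
  let q : ℂ → E4 := fun t =>
    ![α * t, β * t, γ * t, w - 2 * I * PP z₁ z₂ ζ (α * t) (β * t) (γ * t)]
  have hlin : ∀ k : ℂ, HasDerivAt (fun t : ℂ => k * t) k 0 := fun k => by
    simpa using (hasDerivAt_id (0:ℂ)).const_mul k
  have hPP : HasDerivAt (fun t => w - 2 * I * PP z₁ z₂ ζ (α * t) (β * t) (γ * t))
      (-2 * I * (γ * z₁ + α * ζ + β * ζ ^ 2)) 0 := by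
    unfold PP
    have := (((((hlin γ).const_mul z₁).add (((hlin γ).pow 2).const_mul z₂)).add
      ((hlin α).mul_const ζ)).add ((hlin β).mul_const (ζ ^ 2))).const_mul (2 * I) |>.const_sub w
    exact this.congr_deriv (by simp; ring)
  have hq : HasDerivAt q v 0 := hasDeriv4 (hlin α) (hlin β) (hlin γ) hPP
  have hq0 : q 0 = ![0, 0, 0, w] := by simp [q, PP]
  have hcomp : ∀ {k : E4 → ℂ}, DifferentiableAt ℂ k ![0, 0, 0, w] →
      HasDerivAt (fun t => k (q t)) (fderiv ℂ k ![0, 0, 0, w] v) 0 := by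
    intro k hk
    rw [← hq0] at hk ⊢
    exact hk.hasFDerivAt.comp_hasDerivAt 0 hq
  have hev : ∀ᶠ t in 𝓝 (0:ℂ), q t ∈ Metric.ball (0 : E4) r := by
    apply hq.continuousAt.eventually
    rw [hq0]
    exact Metric.isOpen_ball.mem_nhds (mem_ball4 (by simpa) (by simpa) (by simpa) hw)
  have hL : HasDerivAt (fun t => e ![z₁, z₂, ζ, w] - es (q t))
      (- fderiv ℂ es ![0, 0, 0, w] v) 0 := (hcomp des).const_sub _
  have hR := (((((((hlin γ).const_mul (f ![z₁, z₂, ζ, w])).add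
    (((hlin γ).pow 2).const_mul (g ![z₁, z₂, ζ, w]))).add
    (((hlin α).add (((hlin β).const_mul 2).mul_const ζ)).const_mul (h ![z₁, z₂, ζ, w]))).add
    ((hcomp dfs).mul_const ζ)).add ((hcomp dgs).mul_const (ζ ^ 2))).add
    ((hcomp dhs).mul (((hlin γ).const_mul (2 * z₂)).const_add z₁))).const_mul (2 * I)
  have := hL.unique (hR.congr_of_eventuallyEq (by
    filter_upwards [hev] with t ht
    have n0 := norm_of_mem ht 0
    have n1 := norm_of_mem ht 1
    have n2 := norm_of_mem ht 2
    have n3 := norm_of_mem ht 3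
    exact G z₁ z₂ ζ w (α * t) (β * t) (γ * t) _ h1 h2 h3 hw n0 n1 n2 n3 (by ring)))
  rw [this, hq0]
  simp
  ring

lemma es_derivs (G : Good f g h e fs gs hs es r) {w : ℂ} (hw : ‖w‖ < r)
    (des : DifferentiableAt ℂ es ![0, 0, 0, w]) :
    fderiv ℂ es ![0, 0, 0, w] ![1, 0, 0, 0] = -2 * I * h ![0, 0, 0, w] ∧
    fderiv ℂ es ![0, 0, 0, w] ![0, 1, 0, 0] = 0 ∧
    fderiv ℂ es ![0, 0, 0, w] ![0, 0, 1, 0] = -2 * I * f ![0, 0, 0, w] := by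
  have hr : 0 < r := lt_of_le_of_lt (norm_nonneg _) hw
  have key : ∀ α β γ : ℂ, fderiv ℂ es ![0, 0, 0, w] ![α, β, γ, 0] =
      -2 * I * (f ![0, 0, 0, w] * γ + h ![0, 0, 0, w] * α) := by
    intro α β γ
    have hlin : ∀ k : ℂ, HasDerivAt (fun t : ℂ => k * t) k 0 := fun k => by
      simpa using (hasDerivAt_id (0:ℂ)).const_mul k
    let q : ℂ → E4 := fun t => ![α * t, β * t, γ * t, w]
    have hq : HasDerivAt q ![α, β, γ, 0] 0 :=
      hasDeriv4 (hlin α) (hlin β) (hlin γ) (hasDerivAt_const _ _)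
    have hq0 : q 0 = ![0, 0, 0, w] := by simp [q]
    have h1 : HasDerivAt (fun t => es (q t)) (fderiv ℂ es ![0, 0, 0, w] ![α, β, γ, 0]) 0 := by
      rw [← hq0] at des ⊢
      exact des.hasFDerivAt.comp_hasDerivAt 0 hq
    have hev : ∀ᶠ t in 𝓝 (0:ℂ), q t ∈ Metric.ball (0 : E4) r := by
      apply hq.continuousAt.eventually
      rw [hq0]
      exact Metric.isOpen_ball.mem_nhds (mem_ball4 (by simpa) (by simpa) (by simpa) hw)
    have h2 := ((((hlin γ).const_mul (f ![0, 0, 0, w])).add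
      (((hlin γ).pow 2).const_mul (g ![0, 0, 0, w]))).add
      ((hlin α).const_mul (h ![0, 0, 0, w]))).const_mul (2 * I) |>.const_sub (e ![0, 0, 0, w])
    have := h1.unique (h2.congr_of_eventuallyEq (by
      filter_upwards [hev] with t ht
      have n0 := norm_of_mem ht 0
      have n1 := norm_of_mem ht 1
      have n2 := norm_of_mem ht 2
      exact stepA' G n0 n1 n2 hw))
    rw [this]
    simp
  refine ⟨?_, ?_, ?_⟩ <;> rw [key] <;> ring

lemma poly_aux {c0 c1 c2 c3 c4 : ℂ} (hr : 0 < r)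
    (h : ∀ x : ℂ, ‖x‖ < r → c0 + c1 * x + c2 * x ^ 2 + c3 * x ^ 3 + c4 * x ^ 4 = 0) :
    c0 = 0 ∧ c1 = 0 ∧ c2 = 0 ∧ c3 = 0 ∧ c4 = 0 := by
  have := poly_zero (fun i => if i = 0 then c0 else if i = 1 then c1 else if i = 2 then c2
    else if i = 3 then c3 else c4) 5 r hr (by
      intro x hx
      have := h x hx
      simpa [Finset.sum_range_succ] using this)
  exact ⟨by simpa using this 0 (by norm_num), by simpa using this 1 (by norm_num),
    by simpa using this 2 (by norm_num), by simpa using this 3 (by norm_num),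
    by simpa using this 4 (by norm_num)⟩

lemma stepC (G : Good f g h e fs gs hs es r) {w : ℂ} (hw : ‖w‖ < r)
    (dfs : DifferentiableAt ℂ fs ![0, 0, 0, w]) (dgs : DifferentiableAt ℂ gs ![0, 0, 0, w])
    (dhs : DifferentiableAt ℂ hs ![0, 0, 0, w]) (des : DifferentiableAt ℂ es ![0, 0, 0, w]) :
    fderiv ℂ gs ![0, 0, 0, w] ![0, 0, 0, 1] = 0 ∧
    fderiv ℂ hs ![0, 0, 0, w] ![0, 0, 0, 1] = 0 ∧
    (∀ z₁ z₂ ζ : ℂ, ‖z₁‖ < r → ‖z₂‖ < r → ‖ζ‖ < r →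
      f ![z₁, z₂, ζ, w] = f ![0, 0, 0, w] + z₁ * (fderiv ℂ es ![0, 0, 0, w] ![0, 0, 0, 1]
        - fderiv ℂ hs ![0, 0, 0, w] ![0, 0, 1, 0])
        - fderiv ℂ fs ![0, 0, 0, w] ![0, 0, 1, 0] * ζ
        + 2 * I * z₁ * ζ * fderiv ℂ fs ![0, 0, 0, w] ![0, 0, 0, 1]
        - fderiv ℂ gs ![0, 0, 0, w] ![0, 0, 1, 0] * ζ ^ 2 - 2 * z₂ * hs ![0, 0, 0, w]) ∧
    (∀ z₁ z₂ ζ : ℂ, ‖z₁‖ < r → ‖z₂‖ < r → ‖ζ‖ < r →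
      h ![z₁, z₂, ζ, w] = h ![0, 0, 0, w] + ζ * (fderiv ℂ es ![0, 0, 0, w] ![0, 0, 0, 1]
        - fderiv ℂ fs ![0, 0, 0, w] ![1, 0, 0, 0])
        + I * fderiv ℂ fs ![0, 0, 0, w] ![0, 0, 0, 1] * ζ ^ 2) := by
  have hr : 0 < r := lt_of_le_of_lt (norm_nonneg _) hw
  have B := stepB G hw dfs dgs dhs des
  obtain ⟨k0, k1, k2⟩ := es_derivs G hw des
  have Bc := fun (z₁ z₂ ζ : ℂ) (h1 : ‖z₁‖ < r) (h2 : ‖z₂‖ < r) (h3 : ‖ζ‖ < r) =>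
    B 0 0 1 h1 h2 h3
  have Ba := fun (z₁ z₂ ζ : ℂ) (h1 : ‖z₁‖ < r) (h2 : ‖z₂‖ < r) (h3 : ‖ζ‖ < r) =>
    B 1 0 0 h1 h2 h3
  have Bb := fun (z₁ z₂ ζ : ℂ) (h1 : ‖z₁‖ < r) (h2 : ‖z₂‖ < r) (h3 : ‖ζ‖ < r) =>
    B 0 1 0 h1 h2 h3
  clear B
  simp only [lin4 _ 0 0 1 (_ * _), lin4 _ 1 0 0 (_ * _), lin4 _ 0 1 0 (_ * _), k0, k1, k2]
    at Bc Ba Bb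
  clear k0 k1 k2
  generalize fderiv ℂ es ![0, 0, 0, w] ![0, 0, 0, 1] = E at *
  generalize fderiv ℂ fs ![0, 0, 0, w] ![0, 0, 0, 1] = fw at *
  generalize fderiv ℂ fs ![0, 0, 0, w] ![1, 0, 0, 0] = fa at *
  generalize fderiv ℂ fs ![0, 0, 0, w] ![0, 1, 0, 0] = fb at *
  generalize fderiv ℂ fs ![0, 0, 0, w] ![0, 0, 1, 0] = fc at *
  generalize fderiv ℂ gs ![0, 0, 0, w] ![0, 0, 0, 1] = gw at *
  generalize fderiv ℂ gs ![0, 0, 0, w] ![1, 0, 0, 0] = ga at *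
  generalize fderiv ℂ gs ![0, 0, 0, w] ![0, 1, 0, 0] = gb at *
  generalize fderiv ℂ gs ![0, 0, 0, w] ![0, 0, 1, 0] = gc at *
  generalize fderiv ℂ hs ![0, 0, 0, w] ![0, 0, 0, 1] = hw' at *
  generalize fderiv ℂ hs ![0, 0, 0, w] ![1, 0, 0, 0] = ha at *
  generalize fderiv ℂ hs ![0, 0, 0, w] ![0, 1, 0, 0] = hb at *
  generalize fderiv ℂ hs ![0, 0, 0, w] ![0, 0, 1, 0] = hc at *
  have I2 : I ^ 2 = -1 := I_sq
  have hI : (2 * I) ≠ 0 := by simp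
  have Fh : ∀ z₁ z₂ ζ : ℂ, ‖z₁‖ < r → ‖z₂‖ < r → ‖ζ‖ < r →
      h ![z₁, z₂, ζ, w] = h ![0, 0, 0, w] + ζ * E - fa * ζ - ga * ζ ^ 2 - ha * z₁
        + 2 * I * ζ ^ 2 * fw + 2 * I * ζ ^ 3 * gw + 2 * I * ζ * z₁ * hw' := by
    intro z₁ z₂ ζ h1 h2 h3
    apply mul_left_cancel₀ hI
    have := Ba z₁ z₂ ζ h1 h2 h3
    linear_combination -this
  have Pb : ∀ z₁ ζ : ℂ, ‖z₁‖ < r → ‖ζ‖ < r →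
      (z₁ * hb) + (2 * h ![0, 0, 0, w] + fb - 2 * ha * z₁) * ζ
       + (E - 2 * fa + gb + 2 * I * hw' * z₁) * ζ ^ 2 + (-2 * ga + 2 * I * fw) * ζ ^ 3
       + (2 * I * gw) * ζ ^ 4 = 0 := by
    intro z₁ ζ h1 h3
    apply mul_left_cancel₀ hI
    have := Bb z₁ 0 ζ h1 (by simpa) h3
    rw [Fh z₁ 0 ζ h1 (by simpa) h3] at this
    linear_combination -this
  have Q0 := fun z₁ (h1 : ‖z₁‖ < r) => poly_aux hr (fun ζ h3 => Pb z₁ ζ h1 h3)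
  obtain ⟨z, hz, hz0⟩ : ∃ z : ℂ, ‖z‖ < r ∧ z ≠ 0 :=
    ⟨((r / 2 : ℝ) : ℂ), by rw [norm_real, Real.norm_eq_abs, abs_of_pos (by positivity)]; linarith,
      by exact_mod_cast (by positivity : (r / 2 : ℝ) ≠ 0)⟩
  have A1 := Q0 z hz
  have A2 := Q0 0 (by simpa)
  have gw0 : gw = 0 := by
    have := A1.2.2.2.2; simpa using this
  have hw0 : hw' = 0 := by
    have : (2 * I * z) * hw' = 0 := by linear_combination A1.2.2.1 - A2.2.2.1
    simpa [hz0] using this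
  have ha0 : ha = 0 := by
    have : z * ha = 0 := by linear_combination (A1.2.1 - A2.2.1) / (-2)
    simpa [hz0] using this
  have hga : ga = I * fw := by linear_combination A1.2.2.2.1 / (-2)
  refine ⟨gw0, hw0, ?_, ?_⟩
  · intro z₁ z₂ ζ h1 h2 h3
    apply mul_left_cancel₀ hI
    have := Bc z₁ z₂ ζ h1 h2 h3
    rw [gw0, hw0] at this
    linear_combination -this
  · intro z₁ z₂ ζ h1 h2 h3
    rw [Fh z₁ z₂ ζ h1 h2 h3, gw0, hw0, ha0, hga]
    ring
end phase1

lemma cj_vec (f : E4 → ℂ) (a b c d : ℂ) :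
    cj f ![a, b, c, d] = conj (f ![conj a, conj b, conj c, conj d]) := by
  unfold cj
  congr 2
  funext i; fin_cases i <;> simp

lemma vec_zero : (![0, 0, 0, 0] : E4) = 0 := by
  funext i; fin_cases i <;> simp

/-- first structure data: one-variable coefficient functions -/
structure Data (f h e : E4 → ℂ) (r : ℝ) (f0 E0 dE K N ψ dF : ℂ → ℂ) : Prop where
  hf : ∀ z₁ z₂ ζ w : ℂ, ‖z₁‖ < r → ‖z₂‖ < r → ‖ζ‖ < r → ‖w‖ < r →
    f ![z₁, z₂, ζ, w] = f0 w + z₁ * (dE w - ψ w) + K w * ζ + 2 * I * z₁ * ζ * dF w - N w * ζ ^ 2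
  hh : ∀ z₁ z₂ ζ w : ℂ, ‖z₁‖ < r → ‖z₂‖ < r → ‖ζ‖ < r → ‖w‖ < r →
    h ![z₁, z₂, ζ, w] = conj (ψ (conj w)) * ζ + I * dF w * ζ ^ 2
  he : ∀ z₁ z₂ ζ w : ℂ, ‖z₁‖ < r → ‖z₂‖ < r → ‖ζ‖ < r → ‖w‖ < r →
    e ![z₁, z₂, ζ, w] = E0 w + 2 * I * conj (f0 (conj w)) * ζ
  hE : ∀ w : ℂ, ‖w‖ < r → conj (E0 (conj w)) = E0 w
  hdE : ∀ w : ℂ, ‖w‖ < r → HasDerivAt E0 (dE w) w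
  hdF : ∀ w : ℂ, ‖w‖ < r → HasDerivAt (fun w => conj (f0 (conj w))) (dF w) w
  f00 : f0 0 = 0
  E00 : E0 0 = 0

lemma slice_deriv {k : E4 → ℂ} {w : ℂ} (hk : DifferentiableAt ℂ k ![0, 0, 0, w]) :
    HasDerivAt (fun w => k ![0, 0, 0, w]) (fderiv ℂ k ![0, 0, 0, w] ![0, 0, 0, 1]) w :=
  hk.hasFDerivAt.comp_hasDerivAt w
    (hasDeriv4 (hasDerivAt_const _ _) (hasDerivAt_const _ _) (hasDerivAt_const _ _)
      (hasDerivAt_id w))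

lemma slice_deriv2 {k : E4 → ℂ} {w : ℂ} (hk : DifferentiableAt ℂ k ![0, 0, 0, w]) :
    HasDerivAt (fun c => k ![0, 0, c, w]) (fderiv ℂ k ![0, 0, 0, w] ![0, 0, 1, 0]) 0 :=
  HasFDerivAt.comp_hasDerivAt (0:ℂ) hk.hasFDerivAt
    (hasDeriv4 (hasDerivAt_const _ _) (hasDerivAt_const _ _) (hasDerivAt_id 0)
      (hasDerivAt_const _ _))

lemma slice_const {k : E4 → ℂ} {r : ℝ} (h0 : k 0 = 0)
    (hd : ∀ p ∈ Metric.ball (0 : E4) r, DifferentiableAt ℂ k p)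
    (hk : ∀ w : ℂ, ‖w‖ < r → fderiv ℂ k ![0, 0, 0, w] ![0, 0, 0, 1] = 0) {w : ℂ}
    (hw : ‖w‖ < r) : k ![0, 0, 0, w] = 0 := by
  have hr : 0 < r := lt_of_le_of_lt (norm_nonneg _) hw
  have hD : ∀ w ∈ Metric.ball (0:ℂ) r, HasDerivAt (fun w => k ![0, 0, 0, w]) 0 w := by
    intro w hw
    have hw' : ‖w‖ < r := by simpa using hw
    have := slice_deriv (hd _ (mem_ball4 (by simpa) (by simpa) (by simpa) hw'))
    rwa [hk w hw'] at this
  have := Metric.isOpen_ball.is_const_of_deriv_eq_zero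
    (convex_ball (0:ℂ) r).isPreconnected
    (fun w hw => (hD w hw).differentiableAt.differentiableWithinAt)
    (fun w hw => (hD w hw).deriv) (x := w) (y := 0) (by simpa using hw) (by simpa)
  simp only [vec_zero, h0] at this
  exact this

lemma stepD {f g h e : E4 → ℂ} {r : ℝ} (hr : 0 < r)
    (G : Good f g h e (cj f) (cj g) (cj h) (cj e) r)
    (df : ∀ p ∈ Metric.ball (0 : E4) r, DifferentiableAt ℂ (cj f) p)
    (dg : ∀ p ∈ Metric.ball (0 : E4) r, DifferentiableAt ℂ (cj g) p)
    (dh : ∀ p ∈ Metric.ball (0 : E4) r, DifferentiableAt ℂ (cj h) p)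
    (de : ∀ p ∈ Metric.ball (0 : E4) r, DifferentiableAt ℂ (cj e) p)
    (f0 : f 0 = 0) (g0 : g 0 = 0) (h0 : h 0 = 0) (e0 : e 0 = 0) :
    ∃ f0 E0 dE K N ψ dF : ℂ → ℂ, Data f h e r f0 E0 dE K N ψ dF := by
  have m : ∀ w : ℂ, ‖w‖ < r → (![0, 0, 0, w] : E4) ∈ Metric.ball (0 : E4) r := fun w hw =>
    mem_ball4 (by simpa) (by simpa) (by simpa) hw
  have C := fun (w : ℂ) (hw : ‖w‖ < r) => stepC G hw (df _ (m w hw)) (dg _ (m w hw))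
    (dh _ (m w hw)) (de _ (m w hw))
  have cj0 : ∀ k : E4 → ℂ, k 0 = 0 → cj k 0 = 0 := by
    intro k hk
    rw [← vec_zero, cj_vec]; simp [vec_zero, hk]
  have G0 : ∀ w : ℂ, ‖w‖ < r → cj g ![0, 0, 0, w] = 0 := fun w hw =>
    slice_const (cj0 g g0) dg (fun w hw => (C w hw).1) hw
  have H0 : ∀ w : ℂ, ‖w‖ < r → cj h ![0, 0, 0, w] = 0 := fun w hw =>
    slice_const (cj0 h h0) dh (fun w hw => (C w hw).2.1) hw
  have nc : ∀ {w : ℂ}, ‖w‖ < r → ‖conj w‖ < r := fun hw => by simpa using hw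
  have H0' : ∀ w : ℂ, ‖w‖ < r → h ![0, 0, 0, w] = 0 := fun w hw => by
    have := H0 (conj w) (nc hw)
    rw [cj_vec] at this
    simpa using this
  have E1 : ∀ w : ℂ, ‖w‖ < r → e ![0, 0, 0, w] = cj e ![0, 0, 0, w] := fun w hw => by
    have := stepA G (z₁ := 0) (z₂ := 0) (ζ := 0) (by simpa) (by simpa) (by simpa) hw
    simpa using this
  have hcj : ∀ (k : E4 → ℂ) (w : ℂ), conj (k ![0, 0, 0, conj w]) = cj k ![0, 0, 0, w] := by
    intro k w; rw [cj_vec]; simp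
  refine ⟨fun w => f ![0, 0, 0, w], fun w => cj e ![0, 0, 0, w],
    fun w => fderiv ℂ (cj e) ![0, 0, 0, w] ![0, 0, 0, 1],
    fun w => - fderiv ℂ (cj f) ![0, 0, 0, w] ![0, 0, 1, 0],
    fun w => fderiv ℂ (cj g) ![0, 0, 0, w] ![0, 0, 1, 0],
    fun w => fderiv ℂ (cj h) ![0, 0, 0, w] ![0, 0, 1, 0],
    fun w => fderiv ℂ (cj f) ![0, 0, 0, w] ![0, 0, 0, 1], ?_, ?_, ?_, ?_, ?_, ?_, ?_, ?_⟩
  · intro z₁ z₂ ζ w h1 h2 h3 hw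
    rw [(C w hw).2.2.1 z₁ z₂ ζ h1 h2 h3, H0 w hw]
    ring
  · intro z₁ z₂ ζ w h1 h2 h3 hw
    rw [(C w hw).2.2.2 z₁ z₂ ζ h1 h2 h3, H0' w hw]
    have hc := slice_deriv2 (dh _ (m _ (nc hw)))
    have hlin : ∀ k : ℂ, HasDerivAt (fun t : ℂ => k * t) k 0 := fun k => by
      simpa using (hasDerivAt_id (0:ℂ)).const_mul k
    have h2 := (hlin (conj (fderiv ℂ (cj e) ![0, 0, 0, w] ![0, 0, 0, 1]
      - fderiv ℂ (cj f) ![0, 0, 0, w] ![1, 0, 0, 0]))).add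
      (((hlin 1).pow 2).const_mul (conj (I * fderiv ℂ (cj f) ![0, 0, 0, w] ![0, 0, 0, 1])))
    have := hc.unique (h2.congr_of_eventuallyEq (by
      filter_upwards [Metric.ball_mem_nhds (0:ℂ) hr] with t ht
      have ht' : ‖t‖ < r := by simpa using ht
      rw [cj_vec]
      simp only [Complex.conj_conj, map_zero]
      rw [(C w hw).2.2.2 0 0 (conj t) (by simpa) (by simpa) (nc ht'), H0' w hw]
      simp
      ring))
    simp only [this]
    simp
    ring
  · intro z₁ z₂ ζ w h1 h2 h3 hw
    rw [stepA G h1 h2 h3 hw, G0 w hw, H0 w hw]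
    simp only [hcj]
    ring
  · intro w hw
    show conj (cj e ![0, 0, 0, conj w]) = cj e ![0, 0, 0, w]
    rw [← E1 _ (nc hw), hcj]
  · intro w hw
    exact slice_deriv (de _ (m w hw))
  · intro w hw
    simp only [hcj]
    exact slice_deriv (df _ (m w hw))
  · simp only [vec_zero, f0]
  · simp only [vec_zero, cj0 e e0]

lemma nb {z₁ z₂ c : ℂ} {A r : ℝ} (hr4 : r ≤ 1 / 4) (h1 : ‖z₁‖ ≤ A) (h2 : ‖z₂‖ ≤ A)
    (hc : ‖c‖ < r) : ‖-(2 * I * (z₁ * c + z₂ * c ^ 2))‖ ≤ 5 / 8 * A := by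
  have hA : 0 ≤ A := (norm_nonneg _).trans h1
  have hc4 : ‖c‖ ≤ 1 / 4 := hc.le.trans hr4
  have e1 : ‖z₁ * c‖ ≤ A * (1 / 4) := by
    rw [norm_mul]; gcongr
  have e2 : ‖z₂ * c ^ 2‖ ≤ A * (1 / 4) ^ 2 := by
    rw [norm_mul, norm_pow]; gcongr
  have e3 := norm_add_le (z₁ * c) (z₂ * c ^ 2)
  rw [norm_neg, norm_mul]
  simp only [norm_mul, norm_I, Complex.norm_ofNat, mul_one] at *
  linarith

section phase2
variable {f g h e : E4 → ℂ} {r : ℝ} {f0 E0 dE K N ψ dF : ℂ → ℂ}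

lemma cjf_slice (D : Data f h e r f0 E0 dE K N ψ dF) {c x : ℂ} (hc : ‖c‖ < r) (hx : ‖x‖ < r) :
    cj f ![0, 0, c, x] = conj (f0 (conj x)) + conj (K (conj x)) * c
      - conj (N (conj x)) * c ^ 2 := by
  have hr : 0 < r := lt_of_le_of_lt (norm_nonneg _) hx
  rw [cj_vec, map_zero, D.hf 0 0 (conj c) (conj x) (by simpa) (by simpa) (by simpa) (by simpa)]
  simp

lemma cjh_slice (D : Data f h e r f0 E0 dE K N ψ dF) {c x : ℂ} (hc : ‖c‖ < r) (hx : ‖x‖ < r) :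
    cj h ![0, 0, c, x] = ψ x * c - I * conj (dF (conj x)) * c ^ 2 := by
  have hr : 0 < r := lt_of_le_of_lt (norm_nonneg _) hx
  rw [cj_vec, map_zero, D.hh 0 0 (conj c) (conj x) (by simpa) (by simpa) (by simpa) (by simpa)]
  simp
  ring

lemma cje_slice (D : Data f h e r f0 E0 dE K N ψ dF) {c x : ℂ} (hc : ‖c‖ < r) (hx : ‖x‖ < r) :
    cj e ![0, 0, c, x] = E0 x - 2 * I * f0 x * c := by
  have hr : 0 < r := lt_of_le_of_lt (norm_nonneg _) hx
  rw [cj_vec, map_zero, D.he 0 0 (conj c) (conj x) (by simpa) (by simpa) (by simpa) (by simpa)]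
  simp [D.hE x hx, map_ofNat]
  ring

/-- main identity at `a = b = 0` -/
lemma ident0 (G : Good f g h e (cj f) (cj g) (cj h) (cj e) r)
    (D : Data f h e r f0 E0 dE K N ψ dF)
    {z₁ z₂ ζ w c w' : ℂ} (h1 : ‖z₁‖ < r) (h2 : ‖z₂‖ < r) (h3 : ‖ζ‖ < r) (hw : ‖w‖ < r)
    (hc : ‖c‖ < r) (hw' : ‖w'‖ < r) (hww : w' = w - 2 * I * (z₁ * c + z₂ * c ^ 2)) :
    E0 w + 2 * I * conj (f0 (conj w)) * ζ - (E0 w' - 2 * I * f0 w' * c) = 2 * I * (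
      (f0 w + z₁ * (dE w - ψ w) + K w * ζ + 2 * I * z₁ * ζ * dF w - N w * ζ ^ 2) * c
      + g ![z₁, z₂, ζ, w] * c ^ 2
      + (conj (f0 (conj w')) + conj (K (conj w')) * c - conj (N (conj w')) * c ^ 2) * ζ
      + cj g ![0, 0, c, w'] * ζ ^ 2
      + (ψ w' * c - I * conj (dF (conj w')) * c ^ 2) * (z₁ + 2 * z₂ * c)) := by
  have hr : 0 < r := lt_of_le_of_lt (norm_nonneg _) h1
  have := G z₁ z₂ ζ w 0 0 c w' h1 h2 h3 hw (by simpa) (by simpa) hc hw' (by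
    rw [hww, PP]; ring)
  rw [D.he z₁ z₂ ζ w h1 h2 h3 hw, D.hf z₁ z₂ ζ w h1 h2 h3 hw, cje_slice D hc hw',
    cjf_slice D hc hw', cjh_slice D hc hw'] at this
  rw [this]; ring

lemma exists_small (hr : 0 < r) : ∃ z : ℂ, ‖z‖ < r ∧ z ≠ 0 :=
  ⟨((r / 2 : ℝ) : ℂ), by rw [norm_real, Real.norm_eq_abs, abs_of_pos (by positivity)]; linarith,
      by exact_mod_cast (by positivity : (r / 2 : ℝ) ≠ 0)⟩

lemma stepE1 (hr : 0 < r) (G : Good f g h e (cj f) (cj g) (cj h) (cj e) r)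
    (D : Data f h e r f0 E0 dE K N ψ dF) :
    ∃ q : ℂ → ℂ, ∀ w : ℂ, ‖w‖ < r → conj (K (conj w)) = - K w ∧ conj (q (conj w)) = - q w ∧
      ∀ c : ℂ, ‖c‖ < r → cj g ![0, 0, c, w] = N w * c - q w * c ^ 2 := by
  obtain ⟨ρ, hρ, hρ0⟩ := exists_small hr
  let K1 : ℂ → ℂ := fun w => conj (K (conj w))
  let N1 : ℂ → ℂ := fun w => conj (N (conj w))
  have T : ∀ w ζ c : ℂ, ‖w‖ < r → ‖ζ‖ < r → ‖c‖ < r →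
      (K w + K1 w) * ζ * c - N w * ζ ^ 2 * c + g ![0, 0, ζ, w] * c ^ 2
        - N1 w * ζ * c ^ 2 + ζ ^ 2 * cj g ![0, 0, c, w] = 0 := by
    intro w ζ c hw hζ hc
    have := ident0 G D (z₁ := 0) (z₂ := 0) (by simpa) (by simpa) hζ hw hc hw (by simp)
    apply mul_left_cancel₀ (show (2 * I) ≠ 0 by simp)
    simp only [K1, N1]
    linear_combination -this
  let p : ℂ → ℂ := fun w => -((K w + K1 w) - N1 w * ρ) / ρ
  let q : ℂ → ℂ := fun w => (N w * ρ - cj g ![0, 0, ρ, w]) / ρ ^ 2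
  have gpq : ∀ w ζ : ℂ, ‖w‖ < r → ‖ζ‖ < r → g ![0, 0, ζ, w] = p w * ζ + q w * ζ ^ 2 := by
    intro w ζ hw hζ
    have := T w ζ ρ hw hζ hρ
    simp only [p, q]
    field_simp
    linear_combination this
  have gspq : ∀ w c : ℂ, ‖w‖ < r → ‖c‖ < r → cj g ![0, 0, c, w] =
      conj (p (conj w)) * c + conj (q (conj w)) * c ^ 2 := by
    intro w c hw hc
    rw [cj_vec, map_zero, gpq _ _ (by simpa) (by simpa)]
    simp
  refine ⟨q, fun w hw => ?_⟩
  have R : ∀ c : ℂ, ‖c‖ < r →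
      ((K w + K1 w) * c + (p w - N1 w) * c ^ 2 = 0 ∧
       (conj (p (conj w)) - N w) * c + (q w + conj (q (conj w))) * c ^ 2 = 0) := by
    intro c hc
    have := poly_aux (c0 := 0) (c1 := (K w + K1 w) * c + (p w - N1 w) * c ^ 2)
      (c2 := (conj (p (conj w)) - N w) * c + (q w + conj (q (conj w))) * c ^ 2)
      (c3 := 0) (c4 := 0) hr (by
        intro ζ hζ
        have := T w ζ c hw hζ hc
        rw [gpq w ζ hw hζ, gspq w c hw hc] at this
        linear_combination this)
    exact ⟨this.2.1, this.2.2.1⟩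
  have R1 := poly_aux (c0 := 0) (c1 := K w + K1 w) (c2 := p w - N1 w) (c3 := 0) (c4 := 0) hr
    (by intro c hc; linear_combination (R c hc).1)
  have R2 := poly_aux (c0 := 0) (c1 := conj (p (conj w)) - N w)
    (c2 := q w + conj (q (conj w))) (c3 := 0) (c4 := 0) hr
    (by intro c hc; linear_combination (R c hc).2)
  have a1 := R1.2.1
  have a2 := R2.2.1
  have a3 := R2.2.2.1
  refine ⟨by linear_combination a1, by linear_combination a3, ?_⟩
  intro c hc
  rw [gspq w c hw hc]
  linear_combination c * a2 + c ^ 2 * a3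

lemma stepE (hr : 0 < r) (hr4 : r ≤ 1 / 4) (G : Good f g h e (cj f) (cj g) (cj h) (cj e) r)
    (D : Data f h e r f0 E0 dE K N ψ dF) {q : ℂ → ℂ}
    (hK : ∀ w : ℂ, ‖w‖ < r → conj (K (conj w)) = - K w)
    (hq : ∀ w c : ℂ, ‖w‖ < r → ‖c‖ < r → cj g ![0, 0, c, w] = N w * c - q w * c ^ 2)
    {z₁ z₂ : ℂ} (h1 : ‖z₁‖ < r) (h2 : ‖z₂‖ < r) :
    ∃ α β γ : ℂ, ∀ c x : ℂ, ‖c‖ < r → x = -(2 * I * (z₁ * c + z₂ * c ^ 2)) →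
      - E0 x + 2 * I * f0 x * c = 2 * I * (z₁ * (dE 0 - ψ 0) * c + α * c ^ 2
        + (z₁ + 2 * z₂ * c) * (ψ x * c - I * conj (dF (conj x)) * c ^ 2)) ∧
      (K 0 + 2 * I * z₁ * dF 0) * c + β * c ^ 2 + conj (f0 (conj x)) - K x * c
        - conj (N (conj x)) * c ^ 2 = 0 ∧
      - N 0 * c + γ * c ^ 2 + N x * c - q x * c ^ 2 = 0 := by
  obtain ⟨ρ, hρ, hρ0⟩ := exists_small hr
  have hx : ∀ c : ℂ, ‖c‖ < r → ‖-(2 * I * (z₁ * c + z₂ * c ^ 2))‖ < r := by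
    intro c hc
    have := nb hr4 h1.le h2.le hc
    linarith
  obtain ⟨X, hX⟩ : ∃ X : ℂ → ℂ, ∀ c, X c = -(2 * I * (z₁ * c + z₂ * c ^ 2)) := ⟨_, fun _ => rfl⟩
  simp only [← hX] at hx
  let R0 : ℂ → ℂ := fun c =>
    (- E0 (X c) + 2 * I * f0 (X c) * c) / (2 * I) - (z₁ * (dE 0 - ψ 0) * c
        + (z₁ + 2 * z₂ * c) * (ψ (X c) * c - I * conj (dF (conj (X c))) * c ^ 2))
  let R1 : ℂ → ℂ := fun c =>
    -((K 0 + 2 * I * z₁ * dF 0) * c + conj (f0 (conj (X c))) - K (X c) * c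
        - conj (N (conj (X c))) * c ^ 2)
  let R2 : ℂ → ℂ := fun c =>
    -(- N 0 * c + N (X c) * c - q (X c) * c ^ 2)
  have T : ∀ ζ c : ℂ, ‖ζ‖ < r → ‖c‖ < r →
      g ![z₁, z₂, ζ, 0] * c ^ 2 = R0 c + R1 c * ζ + R2 c * ζ ^ 2 := by
    intro ζ c hζ hc
    have := ident0 G D h1 h2 hζ (w := 0) (by simpa) hc (hx c hc) (by rw [hX]; ring)
    rw [hq _ c (hx c hc) hc, hK _ (hx c hc)] at this
    simp only [R0, R1, R2]
    simp only [D.f00, D.E00, map_zero] at this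
    apply mul_left_cancel₀ (show (2 * I) ≠ 0 by simp)
    have hI : I ≠ 0 := I_ne_zero
    field_simp
    linear_combination -this
  refine ⟨R0 ρ / ρ ^ 2, R1 ρ / ρ ^ 2, R2 ρ / ρ ^ 2, ?_⟩
  intro c x hc hcx
  rw [← hX] at hcx
  subst hcx
  have P := poly_aux (c0 := R0 ρ / ρ ^ 2 * c ^ 2 - R0 c) (c1 := R1 ρ / ρ ^ 2 * c ^ 2 - R1 c)
    (c2 := R2 ρ / ρ ^ 2 * c ^ 2 - R2 c) (c3 := 0) (c4 := 0) hr (by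
      intro ζ hζ
      have t1 := T ζ c hζ hc
      have t2 := T ζ ρ hζ hρ
      field_simp
      linear_combination ρ ^ 2 * t1 - c ^ 2 * t2)
  have hI : (2 * I) ≠ 0 := by simp
  obtain ⟨P0, P1, P2, -⟩ := P
  generalize R0 ρ / ρ ^ 2 = α at *
  generalize R1 ρ / ρ ^ 2 = β at *
  generalize R2 ρ / ρ ^ 2 = γ at *
  simp only [R0, R1, R2] at P0 P1 P2
  refine ⟨?_, ?_, ?_⟩
  · rw [sub_eq_zero, eq_comm, sub_eq_iff_eq_add, div_eq_iff hI] at P0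
    linear_combination P0
  · linear_combination P1
  · linear_combination P2
end phase2

section phase3
variable {f g h e : E4 → ℂ} {r : ℝ} {f0 E0 dE K N ψ dF : ℂ → ℂ}

lemma sq_ex (hr : 0 < r) {η x : ℂ} (hη : ‖η‖ = r / 2) (hx : ‖x‖ < r ^ 3) :
    ∃ c : ℂ, ‖c‖ < r ∧ x = -(2 * I * (0 * c + η * c ^ 2)) := by
  have hη0 : η ≠ 0 := by
    intro h0; rw [h0, norm_zero] at hη; linarith
  obtain ⟨c, hc⟩ := IsAlgClosed.exists_pow_nat_eq (x / (-(2 * I * η))) (n := 2) (by norm_num)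
  refine ⟨c, ?_, ?_⟩
  · have h1 : ‖c‖ ^ 2 = ‖x‖ / r := by
      rw [← norm_pow, hc]
      simp [hη]
      congr 1; ring
    have h2 : ‖c‖ ^ 2 < r ^ 2 := by
      rw [h1, div_lt_iff₀ hr]; linarith [show r ^ 2 * r = r ^ 3 by ring]
    exact lt_of_pow_lt_pow_left₀ 2 hr.le h2
  · rw [hc]
    have hI : I ≠ 0 := I_ne_zero
    field_simp
    ring

lemma deriv_of_lin {k : ℂ → ℂ} {R : ℝ} {a d w : ℂ} (hk : ∀ x, ‖x‖ < R → k x = a * x)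
    (hw : ‖w‖ < R) (hd : HasDerivAt k d w) : d = a := by
  have h1 : HasDerivAt (fun x : ℂ => a * x) a w := by
    simpa using (hasDerivAt_id w).const_mul a
  refine hd.unique (h1.congr_of_eventuallyEq ?_)
  have : Metric.ball (0:ℂ) R ∈ 𝓝 w := Metric.isOpen_ball.mem_nhds (by simpa using hw)
  filter_upwards [this] with x hx
  exact hk x (by simpa using hx)

lemma stepF (hr : 0 < r) (hr4 : r ≤ 1 / 4) (G : Good f g h e (cj f) (cj g) (cj h) (cj e) r)
    (D : Data f h e r f0 E0 dE K N ψ dF) {q : ℂ → ℂ}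
    (hK : ∀ w : ℂ, ‖w‖ < r → conj (K (conj w)) = - K w)
    (hq : ∀ w c : ℂ, ‖w‖ < r → ‖c‖ < r → cj g ![0, 0, c, w] = N w * c - q w * c ^ 2) :
    ∃ σ ψ1 E : ℂ, ∀ x, ‖x‖ < r ^ 3 → N x = N 0 ∧ K x = K 0 ∧ q x = q 0 ∧
      f0 x = σ * x ∧ dF x = conj σ ∧ ψ x = ψ1 ∧ E0 x = E * x ∧ dE x = E := by
  have hr3 : 0 < r ^ 3 := by positivity
  have hr1 : r < 1 := by linarith
  have hr3r : r ^ 3 ≤ r := by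
    have : r ^ 3 ≤ r ^ 1 := pow_le_pow_of_le_one hr.le hr1.le (by norm_num)
    simpa using this
  have hI : I ≠ 0 := I_ne_zero
  have I2 : I ^ 2 = -1 := I_sq
  have S := fun (z₁ z₂ : ℂ) (h1 : ‖z₁‖ < r) (h2 : ‖z₂‖ < r) => stepE hr hr4 G D hK hq h1 h2
  let η : ℂ := ((r / 2 : ℝ) : ℂ)
  have hη : ‖η‖ = r / 2 := by
    simp only [η]; rw [norm_real, Real.norm_eq_abs, abs_of_pos (by positivity)]
  have hη0 : η ≠ 0 := by
    intro h0; rw [h0, norm_zero] at hη; linarith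
  have hηr : ‖η‖ < r := by rw [hη]; linarith
  clear_value η
  obtain ⟨α, β, γ, H⟩ := S 0 η (by simpa) hηr
  -- parity at z₁ = 0
  have sq := fun (x : ℂ) (hx : ‖x‖ < r ^ 3) => sq_ex hr hη hx
  have par : ∀ x : ℂ, ‖x‖ < r ^ 3 → x ≠ 0 → N x = N 0 ∧ K x = K 0 ∧ q x = γ := by
    intro x hx hx0
    obtain ⟨c, hc, hcx⟩ := sq x hx
    have hc0 : c ≠ 0 := by
      rintro rfl; apply hx0; rw [hcx]; simp
    have A := H c x hc hcx
    have B := H (-c) x (by simpa) (by rw [hcx]; ring)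
    refine ⟨?_, ?_, ?_⟩
    · apply mul_left_cancel₀ hc0
      linear_combination (A.2.2 - B.2.2) / 2
    · apply mul_left_cancel₀ hc0
      linear_combination -(A.2.1 - B.2.1) / 2
    · apply mul_left_cancel₀ (pow_ne_zero 2 hc0)
      linear_combination -(A.2.2 + B.2.2) / 2
  have hN : ∀ x : ℂ, ‖x‖ < r ^ 3 → N x = N 0 := by
    intro x hx
    by_cases hx0 : x = 0
    · rw [hx0]
    · exact (par x hx hx0).1
  have hK' : ∀ x : ℂ, ‖x‖ < r ^ 3 → K x = K 0 := by
    intro x hx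
    by_cases hx0 : x = 0
    · rw [hx0]
    · exact (par x hx hx0).2.1
  have hq0 : q 0 = γ := by
    have hz : ‖-η * η‖ < r := by
      rw [norm_mul, norm_neg, hη]; nlinarith
    obtain ⟨α', β', γ', H'⟩ := S (-η * η) η hz hηr
    have A := (H' η 0 hηr (by ring)).2.2
    have hx' : ‖-(2 * I * (-η * η * (η / 2) + η * (η / 2) ^ 2))‖ < r ^ 3 := by
      have : -(2 * I * (-η * η * (η / 2) + η * (η / 2) ^ 2)) = I * η ^ 3 / 2 := by ring
      rw [this]
      simp [hη]
      nlinarith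
    have hx0 : -(2 * I * (-η * η * (η / 2) + η * (η / 2) ^ 2)) ≠ 0 := by
      have : -(2 * I * (-η * η * (η / 2) + η * (η / 2) ^ 2)) = I * η ^ 3 / 2 := by ring
      rw [this]
      simp [hη0]
    have B := (H' (η / 2) _ (by rw [norm_div, hη]; simp; linarith) rfl).2.2
    rw [(par _ hx' hx0).1, (par _ hx' hx0).2.2] at B
    apply mul_left_cancel₀ (pow_ne_zero 2 hη0)
    linear_combination -A + 4 * B
  have hqq : ∀ x : ℂ, ‖x‖ < r ^ 3 → q x = q 0 := by
    intro x hx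
    by_cases hx0 : x = 0
    · rw [hx0]
    · rw [hq0]; exact (par x hx hx0).2.2
  -- linearity of f0
  obtain ⟨τ, hτ⟩ : ∃ τ : ℂ, τ = (conj (N 0) - β) / (-(2 * I * η)) := ⟨_, rfl⟩
  have hF : ∀ x : ℂ, ‖x‖ < r ^ 3 → conj (f0 (conj x)) = τ * x := by
    intro x hx
    obtain ⟨c, hc, hcx⟩ := sq x hx
    have A := (H c x hc hcx).2.1
    rw [hK' x hx, hN (conj x) (by simpa)] at A
    have hx2 : x = -(2 * I * η * c ^ 2) := by rw [hcx]; ring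
    have ht : τ * (2 * I * η) + (conj (N 0) - β) = 0 := by rw [hτ]; field_simp; ring
    linear_combination A - τ * hx2 + c ^ 2 * ht
  have hdF : ∀ x : ℂ, ‖x‖ < r ^ 3 → dF x = τ := fun x hx =>
    deriv_of_lin hF hx (D.hdF x (by linarith))
  have hf0 : ∀ x : ℂ, ‖x‖ < r ^ 3 → f0 x = conj τ * x := by
    intro x hx
    have := hF (conj x) (by simpa)
    have := congrArg conj this
    simpa using this
  obtain ⟨σ, hσ⟩ : ∃ σ : ℂ, σ = conj τ := ⟨_, rfl⟩
  rw [← hσ] at hf0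
  -- the zeroth order relation
  obtain ⟨Φ, hΦ⟩ : ∃ Φ : ℂ, Φ = dE 0 - ψ 0 := ⟨_, rfl⟩
  have S0 : ∀ z₁ z₂ : ℂ, ‖z₁‖ < r → ‖z₂‖ < r → ∃ α : ℂ, ∀ c x : ℂ, ‖c‖ < r → ‖x‖ < r ^ 3 →
      x = -(2 * I * (z₁ * c + z₂ * c ^ 2)) →
      - E0 x + 2 * I * σ * x * c = 2 * I * (z₁ * Φ * c + α * c ^ 2
        + (z₁ + 2 * z₂ * c) * (ψ x * c - I * σ * c ^ 2)) := by
    intro z₁ z₂ h1 h2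
    obtain ⟨α, β, γ, H⟩ := S z₁ z₂ h1 h2
    refine ⟨α, fun c x hc hx hcx => ?_⟩
    have := (H c x hc hcx).1
    rw [hf0 x hx, hdF (conj x) (by simpa), ← hσ, ← hΦ] at this
    linear_combination this
  obtain ⟨α₁, H1⟩ := S0 0 η (by simpa) hηr
  obtain ⟨α₂, H2⟩ := S0 η 0 hηr (by simpa)
  obtain ⟨A, hA⟩ : ∃ A : ℂ, A = α₁ / η := ⟨_, rfl⟩
  obtain ⟨B, hB⟩ : ∃ B : ℂ, B = -σ / η + 2 * I * α₂ / (4 * η ^ 2) + σ / (2 * η) := ⟨_, rfl⟩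
  have F1 : ∀ x : ℂ, ‖x‖ < r ^ 3 → E0 x = x * (A + 2 * ψ x) := by
    intro x hx
    obtain ⟨c, hc, hcx⟩ := sq x hx
    have a := H1 c x hc hx hcx
    have b := H1 (-c) x (by simpa) hx (by rw [hcx]; ring)
    have hA' : A * η = α₁ := by rw [hA]; field_simp
    have : - E0 x = 2 * I * c ^ 2 * (A * η + 2 * η * ψ x) := by
      rw [hA']
      linear_combination (a + b) / 2
    have h2 : x = -(2 * I * η * c ^ 2) := by rw [hcx]; ring
    linear_combination -this - (A + 2 * ψ x) * h2
  have F2 : ∀ x : ℂ, ‖x‖ < r ^ 3 → E0 x = x * (Φ + ψ x) + B * x ^ 2 := by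
    intro x hx
    obtain ⟨c, hcdef⟩ : ∃ c : ℂ, c = x / (-(2 * I * η)) := ⟨_, rfl⟩
    have hxc : x = -(2 * I * η * c) := by rw [hcdef]; field_simp
    have hc : ‖c‖ < r := by
      rw [hcdef]
      simp [hη]
      rw [show 2 * (r / 2) = r by ring, div_lt_iff₀ hr]
      nlinarith
    have a := H2 c x hc hx (by rw [hxc]; ring)
    have e1 : B * x ^ 2 = 2 * I * σ * x * c - 2 * I * α₂ * c ^ 2 - 2 * η * σ * c ^ 2 := by
      rw [hB, hxc]
      field_simp
      linear_combination (c ^ 2 * (4 * σ * η + 4 * I * α₂)) * I2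
    rw [e1]
    have e2 : x * (Φ + ψ x) = -(2 * I * η * c) * (Φ + ψ x) := by rw [← hxc]
    rw [e2]
    linear_combination -a + 2 * η * σ * c ^ 2 * I2
  have F3 : ∀ x : ℂ, ‖x‖ < r ^ 3 → x ≠ 0 → ψ x = (Φ - A) + B * x := by
    intro x hx hx0
    apply mul_left_cancel₀ hx0
    linear_combination F1 x hx * (-1) + F2 x hx
  have hB0 : B = 0 := by
    obtain ⟨ε, hε⟩ : ∃ ε : ℂ, ε = ((r ^ 3 / 2 : ℝ) : ℂ) := ⟨_, rfl⟩
    have hεn : ‖ε‖ = r ^ 3 / 2 := by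
      rw [hε, norm_real, Real.norm_eq_abs, abs_of_pos (by positivity)]
    have hε0 : ε ≠ 0 := by
      intro h0; rw [h0, norm_zero] at hεn; linarith
    obtain ⟨α₃, H3⟩ := S0 ε ε (by rw [hεn]; linarith) (by rw [hεn]; linarith)
    have key : ∀ c : ℂ, ‖c‖ < r → c ≠ 0 →
        ε * (A + 2 * (Φ - A) - 2 * (Φ - A)) - (α₃ + I * σ * ε) = 2 * I * B * ε ^ 2 * (1 + c) := by
      intro c hc hc0
      obtain ⟨x, hxd⟩ : ∃ x : ℂ, x = -(2 * I * (ε * c + ε * c ^ 2)) := ⟨_, rfl⟩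
      have hx : ‖x‖ < r ^ 3 := by
        have := nb hr4 (z₁ := ε) (z₂ := ε) (A := r ^ 3 / 2) hεn.le hεn.le hc
        rw [hxd]; linarith
      have hx0 : x ≠ 0 := by
        have h1 : 1 + c ≠ 0 := by
          intro h1
          have : c = -1 := by linear_combination h1
          rw [this] at hc; simp at hc; linarith
        have : x = -(2 * I * ε * c * (1 + c)) := by rw [hxd]; ring
        rw [this]
        simp [hε0, hc0, h1]
      have a := H3 c x hc hx hxd
      rw [F1 x hx, F3 x hx hx0] at a
      apply mul_left_cancel₀ (show 2 * I * c ^ 2 ≠ 0 by simp [hc0])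
      rw [hxd] at a
      linear_combination a
    have k1 := key η hηr hη0
    have k2 := key (-η) (by simpa) (by simpa)
    have : (4 * I * ε ^ 2 * η) * B = 0 := by linear_combination k2 - k1
    simpa [hε0, hη0] using this
  obtain ⟨E, hE⟩ : ∃ E : ℂ, E = A + 2 * (Φ - A) := ⟨_, rfl⟩
  have hE0 : ∀ x : ℂ, ‖x‖ < r ^ 3 → E0 x = E * x := by
    intro x hx
    by_cases hx0 : x = 0
    · rw [hx0, D.E00]; simp
    · rw [F1 x hx, F3 x hx hx0, hB0, hE]; ring
  have hdE : ∀ x : ℂ, ‖x‖ < r ^ 3 → dE x = E := fun x hx =>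
    deriv_of_lin hE0 hx (D.hdE x (by linarith))
  have hψ : ∀ x : ℂ, ‖x‖ < r ^ 3 → ψ x = Φ - A := by
    intro x hx
    by_cases hx0 : x = 0
    · rw [hx0]
      have := hdE 0 (by simpa)
      linear_combination hΦ + this + hE
    · rw [F3 x hx hx0, hB0]; ring
  refine ⟨σ, Φ - A, E, fun x hx => ⟨hN x hx, hK' x hx, hqq x hx, hf0 x hx, ?_, hψ x hx,
    hE0 x hx, hdE x hx⟩⟩
  rw [hdF x hx, hσ]; simp
end phase3

section model

/-- parameter space `(E, k, n, ψ, σ, m)` of the model family -/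
abbrev Par : Type := ℝ × ℝ × ℝ × ℂ × ℂ × ℂ

noncomputable def mF (t : Par) (p : E4) : ℂ :=
  ((t.1 : ℂ) - t.2.2.2.1) * p 0 + t.2.2.2.2.1 * p 3 + I * (t.2.1 : ℂ) * p 2
    + 2 * I * conj t.2.2.2.2.1 * p 0 * p 2 - conj t.2.2.2.2.2 * p 2 ^ 2

noncomputable def mG (t : Par) (p : E4) : ℂ :=
  ((t.1 : ℂ) - 2 * t.2.2.2.1) * p 1 - I * t.2.2.2.2.1 * p 0 + t.2.2.2.2.2 * p 2
    + 2 * I * conj t.2.2.2.2.1 * p 1 * p 2 + I * (t.2.2.1 : ℂ) * p 2 ^ 2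

noncomputable def mH (t : Par) (p : E4) : ℂ :=
  conj t.2.2.2.1 * p 2 + I * conj t.2.2.2.2.1 * p 2 ^ 2

noncomputable def mE (t : Par) (p : E4) : ℂ :=
  (t.1 : ℂ) * p 3 + 2 * I * conj t.2.2.2.2.1 * p 3 * p 2

lemma model_tangent (t : Par) : TangentOn (mF t) (mG t) (mH t) (mE t) Set.univ := by
  obtain ⟨E, k, n, ψ, σ, m⟩ := t
  rintro p ⟨hp, -⟩
  have hp' : (p 3).im = 2 * (p 0 * conj (p 2)).re + 2 * (p 1 * (conj (p 2)) ^ 2).re := hp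
  simp only [mF, mG, mH, mE]
  generalize p 0 = z₁ at *
  generalize p 1 = z₂ at *
  generalize p 2 = ζ at *
  generalize p 3 = w at *
  obtain ⟨x1, y1⟩ := z₁
  obtain ⟨x2, y2⟩ := z₂
  obtain ⟨x3, y3⟩ := ζ
  obtain ⟨x4, y4⟩ := w
  obtain ⟨s1, s2⟩ := σ
  obtain ⟨u1, u2⟩ := ψ
  obtain ⟨m1, m2⟩ := m
  simp [pow_two] at hp' ⊢
  linear_combination (E - 4 * (s1 * y3 - s2 * x3)) * hp'

lemma model_mem (t : Par) :
    ((↑(mF t), ↑(mG t), ↑(mH t), ↑(mE t)) : G4 × G4 × G4 × G4) ∈ tangentGerms0 := by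
  refine ⟨mF t, mG t, mH t, mE t, rfl, by simp [mF], by simp [mG], by simp [mH], by simp [mE],
    Set.univ, isOpen_univ, trivial, ?_, ?_, ?_, ?_, model_tangent t⟩ <;>
  · apply Differentiable.differentiableOn
    first | unfold mF | unfold mG | unfold mH | unfold mE
    fun_prop

/-- the model family as a real linear map into germs -/
noncomputable def TT : Par →ₗ[ℝ] (G4 × G4 × G4 × G4) where
  toFun t := (↑(mF t), ↑(mG t), ↑(mH t), ↑(mE t))
  map_add' s t := by
    have a : mF (s + t) = mF s + mF t := by funext p; simp [mF]; ring
    have b : mG (s + t) = mG s + mG t := by funext p; simp [mG]; ring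
    have c : mH (s + t) = mH s + mH t := by funext p; simp [mH]; ring
    have d : mE (s + t) = mE s + mE t := by funext p; simp [mE]; ring
    rw [a, b, c, d]; rfl
  map_smul' s t := by
    have a : mF (s • t) = s • mF t := by funext p; simp [mF]; ring
    have b : mG (s • t) = s • mG t := by funext p; simp [mG]; ring
    have c : mH (s • t) = s • mH t := by funext p; simp [mH]; ring
    have d : mE (s • t) = s • mE t := by funext p; simp [mE]; ring
    rw [a, b, c, d]; rfl

lemma TT_inj : Function.Injective TT := by
  rw [← LinearMap.ker_eq_bot, LinearMap.ker_eq_bot']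
  intro t ht
  have h1 : ((↑(mF t), ↑(mG t), ↑(mH t), ↑(mE t)) : G4 × G4 × G4 × G4)
      = (((fun _ => 0 : E4 → ℂ) : G4), ((fun _ => 0 : E4 → ℂ) : G4),
          ((fun _ => 0 : E4 → ℂ) : G4), ((fun _ => 0 : E4 → ℂ) : G4)) := ht
  simp only [Prod.mk.injEq, Filter.Germ.coe_eq] at h1
  obtain ⟨hf, hg, hh, he⟩ := h1
  obtain ⟨r, hr, H⟩ := Metric.eventually_nhds_iff_ball.1
    (hf.and (hg.and (hh.and he)))
  obtain ⟨δ, hδ, hδ0⟩ := exists_small hr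
  obtain ⟨E, k, n, ψ, σ, m⟩ := t
  have P1 := H ![0, 0, δ, 0] (mem_ball4 (by simpa) (by simpa) hδ (by simpa))
  have P2 := H ![0, 0, -δ, 0] (mem_ball4 (by simpa) (by simpa) (by simpa) (by simpa))
  have P3 := H ![0, 0, 0, δ] (mem_ball4 (by simpa) (by simpa) (by simpa) hδ)
  simp [mF, mG, mH, mE] at P1 P2 P3
  obtain ⟨a1, b1, c1⟩ := P1
  obtain ⟨a2, b2, c2⟩ := P2
  have hσ : σ = 0 := by
    rcases P3.1 with h | h
    · exact h
    · exact absurd h hδ0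
  have hE : E = 0 := by
    rcases P3.2 with h | h
    · exact h
    · exact absurd h hδ0
  subst hσ hE
  have hψ : ψ = 0 := by simpa [hδ0] using c1
  have hk : k = 0 := by
    have : I * δ * (k : ℂ) = 0 := by linear_combination (a1 - a2) / 2
    simpa [hδ0] using this
  have hm : m = 0 := by
    have : δ * m = 0 := by linear_combination (b1 - b2) / 2
    simpa [hδ0] using this
  have hn : n = 0 := by
    have : I * δ ^ 2 * (n : ℂ) = 0 := by linear_combination (b1 + b2) / 2
    simpa [hδ0] using this
  subst hψ hk hm hn
  rfl

lemma rank_TT : Module.rank ℝ (LinearMap.range TT) = 9 := by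
  rw [← (LinearEquiv.ofInjective TT TT_inj).rank_eq]
  rw [← Module.finrank_eq_rank]
  simp [Par, Module.finrank_prod, Complex.finrank_real_complex]

end model

section phase4
variable {f g h e : E4 → ℂ} {r : ℝ} {f0 E0 dE K N ψ dF : ℂ → ℂ}

lemma imag_of_conj {z : ℂ} (hz : conj z = - z) : z = I * (z.im : ℂ) := by
  have := congrArg Complex.re hz
  simp at this
  apply Complex.ext <;> simp
  linarith

lemma stepG (hr : 0 < r) (hr4 : r ≤ 1 / 4) (G : Good f g h e (cj f) (cj g) (cj h) (cj e) r)
    (D : Data f h e r f0 E0 dE K N ψ dF) :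
    ∃ t : Par, ∀ z₁ z₂ ζ w : ℂ, ‖z₁‖ < r ^ 3 / 4 → ‖z₂‖ < r ^ 3 / 4 → ‖ζ‖ < r ^ 3 / 4 →
      ‖w‖ < r ^ 3 / 4 →
      f ![z₁, z₂, ζ, w] = mF t ![z₁, z₂, ζ, w] ∧ g ![z₁, z₂, ζ, w] = mG t ![z₁, z₂, ζ, w] ∧
      h ![z₁, z₂, ζ, w] = mH t ![z₁, z₂, ζ, w] ∧ e ![z₁, z₂, ζ, w] = mE t ![z₁, z₂, ζ, w] := by
  have hr3 : 0 < r ^ 3 := by positivity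
  have hr1 : r < 1 := by linarith
  have hr3r : r ^ 3 ≤ r := by
    have : r ^ 3 ≤ r ^ 1 := pow_le_pow_of_le_one hr.le hr1.le (by norm_num)
    simpa using this
  obtain ⟨q, hq⟩ := stepE1 hr G D
  obtain ⟨σ, ψ1, E, S⟩ := stepF hr hr4 G D (fun w hw => (hq w hw).1)
    (fun w c hw hc => (hq w hw).2.2 c hc)
  have hK0 : K 0 = I * ((K 0).im : ℂ) := imag_of_conj (by simpa using (hq 0 (by simpa)).1)
  have hq0 : q 0 = I * ((q 0).im : ℂ) := imag_of_conj (by simpa using (hq 0 (by simpa)).2.1)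
  have hE : conj E = E := by
    obtain ⟨δ, hδ, hδ0⟩ := exists_small hr3
    have := D.hE δ (by linarith)
    rw [(S δ hδ).2.2.2.2.2.2.1, (S (conj δ) (by simpa)).2.2.2.2.2.2.1] at this
    simp at this
    rcases this with h | h
    · exact h
    · exact absurd h hδ0
  have hEr : ((E.re : ℝ) : ℂ) = E := Complex.conj_eq_iff_re.1 hE
  refine ⟨(E.re, (K 0).im, (q 0).im, ψ1, σ, conj (N 0)), fun z₁ z₂ ζ w h1 h2 h3 hw => ?_⟩
  have sw : ‖w‖ < r ^ 3 := by linarith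
  obtain ⟨s1, s2, s3, s4, s5, s6, s7, s8⟩ := S w sw
  obtain ⟨-, -, -, c4, -, c6, -, -⟩ := S (conj w) (by simpa)
  refine ⟨?_, ?_, ?_, ?_⟩
  · rw [D.hf z₁ z₂ ζ w (by linarith) (by linarith) (by linarith) (by linarith)]
    rw [s1, s2, s4, s5, s6, s8]
    simp [mF, hEr, ← hK0]
    ring
  · obtain ⟨c, hc, hc0⟩ := exists_small hr
    obtain ⟨w', hww⟩ : ∃ w' : ℂ, w' = w - 2 * I * (z₁ * c + z₂ * c ^ 2) := ⟨_, rfl⟩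
    have hw' : ‖w'‖ < r ^ 3 := by
      have a := nb hr4 h1.le h2.le hc
      have b := norm_add_le w (-(2 * I * (z₁ * c + z₂ * c ^ 2)))
      rw [hww, sub_eq_add_neg]; linarith
    have A := ident0 G D (z₁ := z₁) (z₂ := z₂) (ζ := ζ) (w := w) (c := c) (w' := w')
      (by linarith) (by linarith) (by linarith) (by linarith) hc (by linarith) hww
    obtain ⟨d1, d2, d3, d4, d5, d6, d7, d8⟩ := S w' hw'
    obtain ⟨e1, -, -, e4, e5, -, -, -⟩ := S (conj w') (by simpa)
    rw [(hq w' (by linarith)).2.2 c hc, (hq w' (by linarith)).1] at A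
    rw [s1, s2, s4, s5, s6, s7, s8, c4, d1, d2, d3, d4, d6, d7, e1, e4, e5] at A
    simp only [map_mul, Complex.conj_conj] at A
    simp [mG, hEr, ← hq0]
    apply mul_left_cancel₀ (show 2 * I * c ^ 2 ≠ 0 by simp [hc0])
    rw [hww] at A
    linear_combination -A
  · rw [D.hh z₁ z₂ ζ w (by linarith) (by linarith) (by linarith) (by linarith)]
    rw [s5, c6]
    simp [mH]
  · rw [D.he z₁ z₂ ζ w (by linarith) (by linarith) (by linarith) (by linarith)]
    rw [s7, c4]
    simp only [mE, hEr, map_mul, Complex.conj_conj, Matrix.cons_val]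
    ring

end phase4

lemma local_form {f g h e : E4 → ℂ} {V : Set E4} (hV : IsOpen V) (h0 : (0 : E4) ∈ V)
    (hf : DifferentiableOn ℂ f V) (hg : DifferentiableOn ℂ g V)
    (hh : DifferentiableOn ℂ h V) (he : DifferentiableOn ℂ e V)
    (hT : TangentOn f g h e V)
    (f00 : f 0 = 0) (g00 : g 0 = 0) (h00 : h 0 = 0) (e00 : e 0 = 0) :
    ∃ t : Par, f =ᶠ[𝓝 0] mF t ∧ g =ᶠ[𝓝 0] mG t ∧ h =ᶠ[𝓝 0] mH t ∧ e =ᶠ[𝓝 0] mE t := by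
  obtain ⟨r', hr', hball, H⟩ := polar hV h0 hf hg hh he hT
  obtain ⟨r, hrd⟩ : ∃ r : ℝ, r = min r' (1 / 4) := ⟨_, rfl⟩
  have hr : 0 < r := by rw [hrd]; exact lt_min hr' (by norm_num)
  have hr4 : r ≤ 1 / 4 := by rw [hrd]; exact min_le_right _ _
  have hrr : r ≤ r' := by rw [hrd]; exact min_le_left _ _
  have G : Good f g h e (cj f) (cj g) (cj h) (cj e) r := by
    intro z₁ z₂ ζ w a b c w' h1 h2 h3 h4 h5 h6 h7 h8 hw
    have := H ![z₁, z₂, ζ, w]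
      (mem_ball4 (by linarith) (by linarith) (by linarith) (by linarith)) ![a, b, c, w']
      (mem_ball4 (by linarith) (by linarith) (by linarith) (by linarith)) (by simpa using hw)
    simp only [defect, Matrix.cons_val] at this
    linear_combination this
  have cd : ∀ k : E4 → ℂ, DifferentiableOn ℂ k V → ∀ p ∈ Metric.ball (0 : E4) r,
      DifferentiableAt ℂ (cj k) p := by
    intro k hk p hp
    apply cj_diff
    have hm : (fun i => conj (p i)) ∈ V := by
      apply hball
      rw [mem_ball_zero_iff] at hp ⊢
      have : ‖(fun i => conj (p i) : E4)‖ ≤ ‖p‖ := by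
        rw [pi_norm_le_iff_of_nonneg (norm_nonneg _)]
        intro i
        simpa using norm_le_pi_norm p i
      linarith
    exact (hk _ hm).differentiableAt (hV.mem_nhds hm)
  obtain ⟨f0, E0, dE, K, N, ψ, dF, D⟩ := stepD hr G (cd f hf) (cd g hg) (cd h hh) (cd e he)
    f00 g00 h00 e00
  obtain ⟨t, ht⟩ := stepG hr hr4 G D
  have hr3 : 0 < r ^ 3 / 4 := by positivity
  have key : ∀ p ∈ Metric.ball (0 : E4) (r ^ 3 / 4),
      f p = mF t p ∧ g p = mG t p ∧ h p = mH t p ∧ e p = mE t p := by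
    intro p hp
    rw [mem_ball_zero_iff] at hp
    have hn : ∀ i, ‖p i‖ < r ^ 3 / 4 := fun i => lt_of_le_of_lt (norm_le_pi_norm p i) hp
    have hpp : p = ![p 0, p 1, p 2, p 3] := by
      funext i; fin_cases i <;> rfl
    have := ht (p 0) (p 1) (p 2) (p 3) (hn 0) (hn 1) (hn 2) (hn 3)
    rwa [← hpp] at this
  have nb : Metric.ball (0 : E4) (r ^ 3 / 4) ∈ 𝓝 (0 : E4) := Metric.ball_mem_nhds _ hr3
  refine ⟨t, ?_, ?_, ?_, ?_⟩
  · filter_upwards [nb] with p hp using (key p hp).1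
  · filter_upwards [nb] with p hp using (key p hp).2.1
  · filter_upwards [nb] with p hp using (key p hp).2.2.1
  · filter_upwards [nb] with p hp using (key p hp).2.2.2

/-- Theorem 15(b): the space of germs at `0` of holomorphic 4-tuples tangent to `Q`
near `0` and vanishing at `0` (the stabilizer of the origin in `aut Q`) has real
dimension exactly 9. -/
theorem stmt_9 :
    ∃ W : Submodule ℝ (G4 × G4 × G4 × G4),
      (W : Set (G4 × G4 × G4 × G4)) = tangentGerms0 ∧ Module.rank ℝ ↥W = 9 := by
  refine ⟨LinearMap.range TT, ?_, rank_TT⟩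
  ext x
  constructor
  · rintro ⟨t, rfl⟩
    exact model_mem t
  · rintro ⟨f, g, h, e, rfl, f00, g00, h00, e00, V, hV, h0, hf, hg, hh, he, hT⟩
    obtain ⟨t, a, b, c, d⟩ := local_form hV h0 hf hg hh he hT f00 g00 h00 e00
    refine ⟨t, ?_⟩
    change ((↑(mF t), ↑(mG t), ↑(mH t), ↑(mE t)) : G4 × G4 × G4 × G4) = _
    rw [Filter.Germ.coe_eq.2 a, Filter.Germ.coe_eq.2 b, Filter.Germ.coe_eq.2 c,
      Filter.Germ.coe_eq.2 d]
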